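/- Let Q be a finite set of at least 22 points in the plane such that no two points of Q have the same x-coordinate, and let l be the leftmost point of Q. Then there exists a noncrossing covering path for Q with |Q| − 2 edges that lies in the closed halfplane to the right of the vertical line through l and has l as an endpoint. -/

import Mathlib

/-!
Write `T` for `Q` without its leftmost point `l`. Visiting `T` point by point takes `|T|` edges,
so exactly one edge has to be saved; `Good o T` says that this is possible for a start `o` to the
left of `T`.

If three points of `T` are collinear, the path follows their line and skips one of them as a vertex
(`good_of_collinear`). The points on one side of the line are visited before, in an order
ending at a prescribed point (`exists_ham_path`: from left to right, then by a rotational sweep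
around that point), and those on the other side afterwards, in order of distance from the line
(`exists_peel_path`).

Otherwise an edge is saved at a corner: four points `A, B, C, D`, from left to right and forming a
cap or a cup, are covered by two edges that meet in the intersection of the lines `A B` and `C D`
(`good_of_corner`, `good_of_cap`). This works whenever the other points on the `C`-side of `A B` are
all on one side of `C D`. Two families of corners suffice:

* a cap or cup `A, B, C, D` such that all points to the right of `D` are on the far side of `A B`
  (`Config.good_of_cap_of_right`);
* a cap or cup at the second, third and fourth point and a later point, when the first three points
  turn the other way (`Config.good_of_turn`).

Since a prefix of the sorted sequence can be visited from left to right (`Good.extend_left`), such a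
corner may be sought in any suffix. Suppose there is none. Then the orientations `u i j k` of the
triples of the sorted sequence satisfy the implications collected in `Rigid`, which are symmetric
under reflection. A change of sign between the consecutive triples at `i` and `i + 1` would force
alternating signs from there on, and the last two points then lead to a contradiction
(`Rigid.no_change`). Hence the consecutive triples in the first half of the sequence all have the
same sign; this is impossible, because the last point above the line `P j P (j + 1)` has to move to
the right each time `j` decreases (`Rigid.no_run`). With `21` points these two arguments cover all
cases.
-/

/-- The `i`-th edge of the polygonal path with vertex sequence `v`:
the closed segment from `v i` to `v (i+1)`. -/
def pathEdge {m : ℕ} (v : Fin (m + 1) → ℝ × ℝ) (i : Fin m) : Set (ℝ × ℝ) :=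
  segment ℝ (v i.castSucc) (v i.succ)

/-- A polygonal path is noncrossing if its edges pairwise intersect only in shared
path vertices: two consecutive edges meet exactly at their common endpoint, and two
nonconsecutive edges are disjoint. -/
def IsNoncrossingPath {m : ℕ} (v : Fin (m + 1) → ℝ × ℝ) : Prop :=
  (∀ i j : Fin m, (i : ℕ) + 1 = (j : ℕ) →
      pathEdge v i ∩ pathEdge v j = {v i.succ}) ∧
  (∀ i j : Fin m, (i : ℕ) + 1 < (j : ℕ) →
      pathEdge v i ∩ pathEdge v j = ∅)

/-! ### Polygonal paths as lists of vertices -/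

/-- The union of the closed segments between consecutive entries of a list of points;
a one-element list gives that single point. -/
def pathSet : List (ℝ × ℝ) → Set (ℝ × ℝ)
  | [] => ∅
  | [a] => {a}
  | a :: b :: t => segment ℝ a b ∪ pathSet (b :: t)

/-- List form of noncrossing: every edge meets the rest of the path after it only in its
own final vertex. -/
def NC : List (ℝ × ℝ) → Prop
  | [] => True
  | [_] => True
  | a :: b :: t => a ≠ b ∧ segment ℝ a b ∩ pathSet (b :: t) ⊆ {b} ∧ NC (b :: t)

/-- Each edge `[a, b]` can be peeled off the later vertices: some linear functional is
smaller at `a` than at `b`, and attains at `b` its minimum over `b` and all later vertices. -/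
def Peel : List (ℝ × ℝ) → Prop
  | [] => True
  | [_] => True
  | a :: b :: t =>
      (∃ f : ℝ × ℝ →ₗ[ℝ] ℝ, f a < f b ∧ ∀ c ∈ t, f b ≤ f c) ∧ Peel (b :: t)

lemma pathSet_subset {s : Set (ℝ × ℝ)} (hs : Convex ℝ s) :
    ∀ {L : List (ℝ × ℝ)}, (∀ x ∈ L, x ∈ s) → pathSet L ⊆ s
  | [], _ => by simp [pathSet]
  | [a], h => by simpa [pathSet] using h
  | a :: b :: t, h => by
      simp only [pathSet, Set.union_subset_iff]
      refine ⟨hs.segment_subset (h a (by simp)) (h b (by simp)), pathSet_subset hs ?_⟩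
      intro x hx
      exact h x (List.mem_cons_of_mem _ hx)

lemma mem_pathSet : ∀ {L : List (ℝ × ℝ)} {x : ℝ × ℝ}, x ∈ L → x ∈ pathSet L
  | [], _, h => by simp at h
  | [a], x, h => by simpa [pathSet] using h
  | a :: b :: t, x, h => by
      rcases List.mem_cons.1 h with rfl | h
      · exact Or.inl (left_mem_segment ℝ _ _)
      · exact Or.inr (mem_pathSet h)

lemma convex_lt_fun (f : ℝ × ℝ →ₗ[ℝ] ℝ) (r : ℝ) : Convex ℝ {x | f x < r} :=
  convex_halfSpace_lt f.isLinear r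

lemma convex_le_fun (f : ℝ × ℝ →ₗ[ℝ] ℝ) (r : ℝ) : Convex ℝ {x | f x ≤ r} :=
  convex_halfSpace_le f.isLinear r

lemma convex_gt_fun (f : ℝ × ℝ →ₗ[ℝ] ℝ) (r : ℝ) : Convex ℝ {x | r < f x} :=
  convex_halfSpace_gt f.isLinear r

lemma convex_ge_fun (f : ℝ × ℝ →ₗ[ℝ] ℝ) (r : ℝ) : Convex ℝ {x | r ≤ f x} :=
  convex_halfSpace_ge f.isLinear r

lemma eq_right_of_mem_segment (f : ℝ × ℝ →ₗ[ℝ] ℝ) {a b y : ℝ × ℝ} (hab : f a < f b)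
    (hy : y ∈ segment ℝ a b) (h : f b ≤ f y) : y = b := by
  obtain ⟨s, t, hs, ht, hst, rfl⟩ := hy
  have hs0 : s = 0 := by
    simp only [map_add, map_smul, smul_eq_mul] at h
    have : t = 1 - s := by linarith
    subst this
    nlinarith
  subst hs0
  have : t = 1 := by linarith
  subst this
  simp

lemma Peel.nc : ∀ {L : List (ℝ × ℝ)}, Peel L → NC L
  | [], _ => trivial
  | [_], _ => trivial
  | a :: b :: t, ⟨⟨f, hf, ht⟩, h⟩ => by
      refine ⟨fun e => by simp [e] at hf, ?_, Peel.nc h⟩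
      rintro y ⟨hy, hy'⟩
      have : pathSet (b :: t) ⊆ {x | f b ≤ f x} := by
        refine pathSet_subset (convex_ge_fun f _) ?_
        intro x hx
        rcases List.mem_cons.1 hx with rfl | hx
        · exact le_refl (f x)
        · exact ht x hx
      exact eq_right_of_mem_segment f hf hy (this hy')

lemma pathSet_append (w : ℝ × ℝ) (L₂ : List (ℝ × ℝ)) : ∀ L₁ : List (ℝ × ℝ),
    pathSet (L₁ ++ w :: L₂) = pathSet (L₁ ++ [w]) ∪ pathSet (w :: L₂)
  | [] => by
      have : w ∈ pathSet (w :: L₂) := mem_pathSet (by simp)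
      simp [pathSet, Set.insert_eq_of_mem this]
  | [a] => by
      have : w ∈ segment ℝ a w := right_mem_segment ℝ a w
      simp [pathSet, Set.insert_eq_of_mem this]
  | a :: b :: t => by
      have := pathSet_append w L₂ (b :: t)
      simp only [List.cons_append] at this
      simp [pathSet, this, Set.union_assoc]

lemma nc_append (w : ℝ × ℝ) (L₂ : List (ℝ × ℝ)) : ∀ L₁ : List (ℝ × ℝ),
    NC (L₁ ++ [w]) → NC (w :: L₂) →
    pathSet (L₁ ++ [w]) ∩ pathSet (w :: L₂) ⊆ {w} → NC (L₁ ++ w :: L₂)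
  | [], _, h, _ => h
  | [a], h₁, h₂, h => by
      refine ⟨h₁.1, ?_, h₂⟩
      rintro y ⟨hy, hy'⟩
      exact h ⟨Or.inl hy, hy'⟩
  | a :: b :: t, h₁, h₂, h => by
      have ih := nc_append w L₂ (b :: t) h₁.2.2 h₂
        (fun y hy => h ⟨Or.inr hy.1, hy.2⟩)
      refine ⟨h₁.1, ?_, ih⟩
      have e := pathSet_append w L₂ (b :: t)
      change segment ℝ a b ∩ pathSet (b :: t ++ w :: L₂) ⊆ {b}
      rw [e]
      rintro y ⟨hy, hy' | hy'⟩
      · exact h₁.2.1 ⟨hy, hy'⟩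
      · -- a point of both `[a, b]` and the second path is `w`, which lies on the first path
        -- after `b`, so it is `b`
        have : y = w := h ⟨Or.inl hy, hy'⟩
        refine h₁.2.1 ⟨hy, ?_⟩
        rw [this]
        exact mem_pathSet (L := b :: t ++ [w]) (by simp)

/-- If `f` is strictly larger at all later vertices than at the first vertex `w`, the path
reaches the level `f w` only at `w`. -/
lemma eq_head_of_mem (f : ℝ × ℝ →ₗ[ℝ] ℝ) {w y : ℝ × ℝ} {L : List (ℝ × ℝ)}
    (hL : ∀ z ∈ L, f w < f z) (hy : y ∈ pathSet (w :: L)) (h : f y ≤ f w) : y = w := by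
  cases L with
  | nil => simpa [pathSet] using hy
  | cons b t =>
    rcases hy with hy | hy
    · rw [segment_symm] at hy
      refine eq_right_of_mem_segment (-f) ?_ hy ?_
      · have := hL b (by simp)
        simpa using this
      · simpa using h
    · have := pathSet_subset (convex_gt_fun f (f w)) hL hy
      exact absurd this (not_lt.2 h)

/-- If `f` is strictly smaller at all earlier vertices than at the last vertex `r`, the path
reaches the level `f r` only at `r`. -/
lemma eq_last_of_mem (f : ℝ × ℝ →ₗ[ℝ] ℝ) {r y : ℝ × ℝ} : ∀ {L : List (ℝ × ℝ)},
    (∀ z ∈ L, f z < f r) → y ∈ pathSet (L ++ [r]) → f r ≤ f y → y = r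
  | [], _, hy, _ => by simpa [pathSet] using hy
  | [a], hL, hy, h => by
      rcases hy with hy | hy
      · exact eq_right_of_mem_segment f (hL a (by simp)) hy h
      · simpa [pathSet] using hy
  | a :: b :: t, hL, hy, h => by
      rcases hy with hy | hy
      · have : y ∈ {x | f x < f r} :=
          (convex_lt_fun f (f r)).segment_subset (hL a (by simp)) (hL b (by simp)) hy
        exact absurd this (not_lt.2 h)
      · exact eq_last_of_mem f (L := b :: t)
          (fun z hz => hL z (List.mem_cons_of_mem _ hz)) hy h

/-! ### Paths through all points of a finite set -/

/-- A small multiple of `h` can be added to `f` without destroying any strict inequality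
between values of `f` on a finite set; ties of `f` are then broken by `h`. -/
lemma exists_perturb (f h : ℝ × ℝ →ₗ[ℝ] ℝ) (T : Finset (ℝ × ℝ)) :
    ∃ δ : ℝ, 0 < δ ∧ ∀ p ∈ T, ∀ q ∈ T, f p < f q → (f + δ • h) p < (f + δ • h) q := by
  have key : ∀ p ∈ T, ∀ q ∈ T, ∀ᶠ δ : ℝ in nhdsWithin 0 (Set.Ioi 0),
      f p < f q → (f + δ • h) p < (f + δ • h) q := by
    intro p _ q _
    by_cases hpq : f p < f q
    · have hc : Filter.Tendsto (fun δ : ℝ => (f + δ • h) q - (f + δ • h) p)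
          (nhdsWithin 0 (Set.Ioi 0)) (nhds (f q - f p)) := by
        have : Continuous (fun δ : ℝ => (f + δ • h) q - (f + δ • h) p) := by
          simp only [LinearMap.add_apply, LinearMap.smul_apply, smul_eq_mul]
          fun_prop
        have h0 := this.tendsto 0
        simp only [zero_smul, add_zero] at h0
        exact h0.mono_left nhdsWithin_le_nhds
      filter_upwards [hc.eventually (lt_mem_nhds (sub_pos.2 hpq))] with δ hδ _
      linarith
    · exact Filter.Eventually.of_forall fun _ h' => absurd h' hpq
  have key2 : ∀ᶠ δ : ℝ in nhdsWithin 0 (Set.Ioi 0), ∀ p ∈ T, ∀ q ∈ T,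
      f p < f q → (f + δ • h) p < (f + δ • h) q := by
    rw [Filter.eventually_all_finset]
    intro p hp
    rw [Filter.eventually_all_finset]
    exact key p hp
  obtain ⟨δ, h1, h2⟩ := (key2.and self_mem_nhdsWithin).exists
  exact ⟨δ, h2, h1⟩

/-- Visiting a finite set in increasing order of a functional that is injective on it. -/
lemma exists_mono_path (f : ℝ × ℝ →ₗ[ℝ] ℝ) : ∀ (n : ℕ) (R : Finset (ℝ × ℝ)) (w : ℝ × ℝ),
    R.card = n → Set.InjOn f R → (∀ z ∈ R, f w < f z) →
    ∃ L : List (ℝ × ℝ), L.Perm R.toList ∧ Peel (w :: L) := by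
  intro n
  induction n with
  | zero =>
    intro R w hc _ _
    obtain rfl := Finset.card_eq_zero.1 hc
    exact ⟨[], by simp, trivial⟩
  | succ n ih =>
    intro R w hc hinj hw
    obtain ⟨b, hb, hmin⟩ := R.exists_min_image f (Finset.card_pos.1 (by omega))
    obtain ⟨L, hL, hP⟩ := ih (R.erase b) b (by rw [Finset.card_erase_of_mem hb]; omega)
      (hinj.mono (by simp))
      (fun z hz => lt_of_le_of_ne (hmin z (Finset.mem_of_mem_erase hz)) (fun e =>
        Finset.ne_of_mem_erase hz (hinj hb (Finset.mem_of_mem_erase hz) e).symm))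
    refine ⟨b :: L, ?_, ⟨f, hw b hb, fun c hc => ?_⟩, hP⟩
    · refine (List.Perm.cons b hL).trans ?_
      have := Finset.toList_insert (Finset.notMem_erase b R)
      rw [Finset.insert_erase hb] at this
      exact this.symm
    · have : c ∈ R.erase b := by simpa using hL.mem_iff.1 hc
      exact hmin c (Finset.mem_of_mem_erase this)

/-- If `f w < f z` on the finite set `R`, there is a noncrossing path from `w` through all
points of `R`: visit `R` in increasing order of `f`, ties broken by the abscissa. -/
lemma exists_peel_path (f : ℝ × ℝ →ₗ[ℝ] ℝ) (R : Finset (ℝ × ℝ)) (w : ℝ × ℝ)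
    (hx : Set.InjOn Prod.fst (R : Set (ℝ × ℝ))) (hw : ∀ z ∈ R, f w < f z) :
    ∃ L : List (ℝ × ℝ), L.Perm R.toList ∧ Peel (w :: L) := by
  classical
  obtain ⟨δ, hδ, hp⟩ := exists_perturb f (LinearMap.fst ℝ ℝ ℝ) (insert w R)
  refine exists_mono_path (f + δ • LinearMap.fst ℝ ℝ ℝ) _ R w rfl ?_ ?_
  · intro p hpR q hqR e
    rcases lt_trichotomy (f p) (f q) with h | h | h
    · exact absurd e (hp p (by simp_all) q (by simp_all) h).ne
    · refine hx hpR hqR ?_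
      simpa [h, hδ.ne'] using e
    · exact absurd e (hp q (by simp_all) p (by simp_all) h).ne'
  · intro z hz
    exact hp w (by simp) z (by simp [hz]) (hw z hz)

/-- Sweeping a finite set `Z` by a ray around `r`. The set lies in the open halfplane
`h < h r`, where the angle is measured by `(x - x_r) / (h r - h)`; points on a common ray
are visited in order of decreasing distance from `r`. -/
lemma exists_star_path (h : ℝ × ℝ →ₗ[ℝ] ℝ) (r : ℝ × ℝ) : ∀ (n : ℕ) (Z : Finset (ℝ × ℝ))
    (a : ℝ × ℝ), Z.card = n → Set.InjOn Prod.fst (Z : Set (ℝ × ℝ)) → h a < h r →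
    (∀ z ∈ Z, h z < h r) →
    (∀ z ∈ Z, toLex ((a.1 - r.1) / (h r - h a), h a) < toLex ((z.1 - r.1) / (h r - h z), h z)) →
    ∃ L : List (ℝ × ℝ), L.Perm Z.toList ∧ Peel (a :: (L ++ [r])) := by
  classical
  intro n
  induction n with
  | zero =>
    intro Z a hc _ ha _ _
    obtain rfl := Finset.card_eq_zero.1 hc
    exact ⟨[], by simp, ⟨h, ha, by simp⟩, trivial⟩
  | succ n ih =>
    intro Z a hc hinj ha hZ hlex
    set κ : ℝ × ℝ → ℝ := fun z => (z.1 - r.1) / (h r - h z) with hκ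
    obtain ⟨b, hb, hmin⟩ := Z.exists_min_image (fun z => toLex (κ z, h z))
      (Finset.card_pos.1 (by omega))
    have hinj2 : ∀ z ∈ Z, toLex (κ z, h z) = toLex (κ b, h b) → z = b := by
      intro z hz e
      have e1 : κ z = κ b := by simpa using congrArg (fun t => (ofLex t).1) e
      have e2 : h z = h b := by simpa using congrArg (fun t => (ofLex t).2) e
      refine hinj hz hb ?_
      simp only [hκ, e2] at e1
      have hne : h r - h b ≠ 0 := (sub_pos.2 (hZ b hb)).ne'
      rw [div_left_inj' hne] at e1
      linarith
    obtain ⟨L, hL, hP⟩ := ih (Z.erase b) b (by rw [Finset.card_erase_of_mem hb]; omega)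
      (hinj.mono (by simp)) (hZ b hb) (fun z hz => hZ z (Finset.mem_of_mem_erase hz))
      (fun z hz => lt_of_le_of_ne (hmin z (Finset.mem_of_mem_erase hz)) (fun e =>
        Finset.ne_of_mem_erase hz (hinj2 z (Finset.mem_of_mem_erase hz) e.symm)))
    -- `f` vanishes at `b - r`, and its sign at `z - r` compares the angles of `z` and `b`
    set f : ℝ × ℝ →ₗ[ℝ] ℝ := LinearMap.fst ℝ ℝ ℝ + κ b • h with hf
    have hfz : ∀ z, h z < h r → f z = f r + (κ z - κ b) * (h r - h z) := by
      intro z hz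
      have hne : h r - h z ≠ 0 := (sub_pos.2 hz).ne'
      have : κ z * (h r - h z) = z.1 - r.1 := by simp only [hκ]; field_simp
      simp only [hf, LinearMap.add_apply, LinearMap.smul_apply, LinearMap.fst_apply, smul_eq_mul]
      linarith
    have hfb : f b = f r := by rw [hfz b (hZ b hb)]; ring
    obtain ⟨δ, hδ, hp⟩ := exists_perturb f h (insert a (insert r Z))
    have hle : ∀ p ∈ insert a (insert r Z), ∀ q ∈ insert a (insert r Z),
        f p = f q → h p ≤ h q → (f + δ • h) p ≤ (f + δ • h) q := by
      intro p _ q _ e1 e2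
      simp only [LinearMap.add_apply, LinearMap.smul_apply, smul_eq_mul, e1]
      gcongr
    refine ⟨b :: L, ?_, ⟨f + δ • h, ?_, fun c hc => ?_⟩, hP⟩
    · refine (List.Perm.cons b hL).trans ?_
      have := Finset.toList_insert (Finset.notMem_erase b Z)
      rw [Finset.insert_erase hb] at this
      exact this.symm
    · rcases (Prod.Lex.toLex_lt_toLex).1 (hlex b hb) with h1 | ⟨h1, h2⟩
      · refine hp a (by simp) b (by simp [hb]) ?_
        rw [hfb, hfz a ha]
        have : κ a < κ b := h1
        nlinarith [sub_pos.2 ha]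
      · have : f a = f b := by
          have h1' : κ a = κ b := h1
          rw [hfb, hfz a ha, h1']; ring
        simp only [LinearMap.add_apply, LinearMap.smul_apply, smul_eq_mul, this]
        have h2' : h a < h b := h2
        gcongr
    · rcases List.mem_append.1 hc with hc | hc
      · have hcZ : c ∈ Z := Finset.mem_of_mem_erase (a := b) (by simpa using hL.mem_iff.1 hc)
        rcases (Prod.Lex.toLex_le_toLex).1 (hmin c hcZ) with h1 | ⟨h1, h2⟩
        · refine (hp b (by simp [hb]) c (by simp [hcZ]) ?_).le
          rw [hfb, hfz c (hZ c hcZ)]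
          have : κ b < κ c := h1
          nlinarith [sub_pos.2 (hZ c hcZ)]
        · refine hle b (by simp [hb]) c (by simp [hcZ]) ?_ h2
          have h1' : κ b = κ c := h1
          rw [hfb, hfz c (hZ c hcZ), h1']; ring
      · obtain rfl : c = r := by simpa using hc
        exact hle b (by simp [hb]) c (by simp) hfb (hZ b hb).le

/-- From a point `o` to the left of everything, a noncrossing path through all points of `Z`
that ends at a prescribed point `r` supported by the functional `h`: the points to the left
of `r` are visited from left to right, the others by a rotational sweep around `r`. -/
lemma exists_ham_path (h : ℝ × ℝ →ₗ[ℝ] ℝ) (r : ℝ × ℝ) : ∀ (n : ℕ) (Z : Finset (ℝ × ℝ))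
    (o : ℝ × ℝ), Z.card = n → Set.InjOn Prod.fst (Z : Set (ℝ × ℝ)) → o.1 < r.1 → h o < h r →
    (∀ z ∈ Z, o.1 < z.1) → (∀ z ∈ Z, h z < h r) →
    ∃ L : List (ℝ × ℝ), L.Perm Z.toList ∧ Peel (o :: (L ++ [r])) := by
  classical
  intro n
  induction n with
  | zero =>
    intro Z a hc _ _ ha _ _
    obtain rfl := Finset.card_eq_zero.1 hc
    exact ⟨[], by simp, ⟨h, ha, by simp⟩, trivial⟩
  | succ n ih =>
    intro Z o hc hinj hor ho hoZ hZ
    obtain ⟨b, hb, hmin⟩ := Z.exists_min_image Prod.fst (Finset.card_pos.1 (by omega))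
    by_cases hbr : b.1 < r.1
    · obtain ⟨L, hL, hP⟩ := ih (Z.erase b) b (by rw [Finset.card_erase_of_mem hb]; omega)
        (hinj.mono (by simp)) hbr (hZ b hb)
        (fun z hz => lt_of_le_of_ne (hmin z (Finset.mem_of_mem_erase hz)) (fun e =>
          Finset.ne_of_mem_erase hz (hinj hb (Finset.mem_of_mem_erase hz) e).symm))
        (fun z hz => hZ z (Finset.mem_of_mem_erase hz))
      refine ⟨b :: L, ?_, ⟨LinearMap.fst ℝ ℝ ℝ, hoZ b hb, fun c hc => ?_⟩, hP⟩
      · refine (List.Perm.cons b hL).trans ?_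
        have := Finset.toList_insert (Finset.notMem_erase b Z)
        rw [Finset.insert_erase hb] at this
        exact this.symm
      · rcases List.mem_append.1 hc with hc | hc
        · have hcZ : c ∈ Z := Finset.mem_of_mem_erase (a := b) (by simpa using hL.mem_iff.1 hc)
          exact hmin c hcZ
        · obtain rfl : c = r := by simpa using hc
          exact hbr.le
    · refine exists_star_path h r _ Z o hc hinj ho hZ ?_
      intro z hz
      refine Prod.Lex.toLex_lt_toLex.2 (Or.inl ?_)
      have h1 : (o.1 - r.1) / (h r - h o) < 0 :=
        div_neg_of_neg_of_pos (by linarith) (by linarith)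
      have h2 : 0 ≤ (z.1 - r.1) / (h r - h z) :=
        div_nonneg (by linarith [hmin z hz]) (by linarith [hZ z hz])
      exact h1.trans_le h2

/-! ### Short covering paths -/

/-- There is a noncrossing covering path for `insert o T` that starts at `o`, stays in the
closed halfplane to the right of `o` and has `|T| - 1` edges (one edge fewer than a path
visiting the points of `T` one at a time). The list `L` holds the vertices after `o`. -/
def Good (o : ℝ × ℝ) (T : Finset (ℝ × ℝ)) : Prop :=
  ∃ L : List (ℝ × ℝ), NC (o :: L) ∧ L.length + 1 = T.card ∧
    (∀ p ∈ T, p ∈ pathSet (o :: L)) ∧ ∀ p ∈ L, o.1 ≤ p.1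

/-- A path for the rest of `T` can be preceded by an edge that starts further left. -/
lemma Good.extend_left {o o' : ℝ × ℝ} {T : Finset (ℝ × ℝ)} (ho : o.1 < o'.1) (ho' : o' ∈ T)
    (h : Good o' (T.erase o')) : Good o T := by
  obtain ⟨L, h1, h2, h3, h4⟩ := h
  have hsub : pathSet (o' :: L) ⊆ {x | LinearMap.fst ℝ ℝ ℝ o' ≤ LinearMap.fst ℝ ℝ ℝ x} := by
    refine pathSet_subset (convex_ge_fun _ _) ?_
    intro x hx
    rcases List.mem_cons.1 hx with rfl | hx
    · exact le_refl x.1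
    · exact h4 x hx
  refine ⟨o' :: L, ⟨fun e => by simp [e] at ho, ?_, h1⟩, ?_, ?_, ?_⟩
  · rintro y ⟨hy, hy'⟩
    exact eq_right_of_mem_segment (LinearMap.fst ℝ ℝ ℝ) ho hy (hsub hy')
  · rw [Finset.card_erase_of_mem ho'] at h2
    have := Finset.card_pos.2 ⟨o', ho'⟩
    simp only [List.length_cons]
    omega
  · intro p hp
    by_cases e : p = o'
    · subst e
      exact mem_pathSet (by simp)
    · exact Or.inr (h3 p (Finset.mem_erase.2 ⟨e, hp⟩))
  · intro p hp
    rcases List.mem_cons.1 hp with rfl | hp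
    · exact ho.le
    · exact ho.le.trans (h4 p hp)

lemma map_eq_of_mem_segment (f : ℝ × ℝ →ₗ[ℝ] ℝ) {a b y : ℝ × ℝ} (hab : f a = f b)
    (hy : y ∈ segment ℝ a b) : f y = f b := by
  obtain ⟨s, t, -, -, hst, rfl⟩ := hy
  simp only [map_add, map_smul, smul_eq_mul, hab]
  rw [← add_mul, hst, one_mul]

/-- The saving device. Two edges `[A, v]` and `[v, D]` cover four points `A, B, C, D`. The
line of the first edge (a level set of `G`) separates the remaining points into two sides,
and on the side of `C, D` all other points are strictly on one side of the line of the second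
edge (a level set of `H`). So the side of `o` can be visited before this corner and the other
side after it, without crossings. -/
lemma good_of_corner {o : ℝ × ℝ} {T : Finset (ℝ × ℝ)}
    (hinj : Set.InjOn Prod.fst (T : Set (ℝ × ℝ))) (hoT : ∀ z ∈ T, o.1 < z.1)
    {A B C D v : ℝ × ℝ} (hA : A ∈ T) (hB : B ∈ T) (hC : C ∈ T) (hD : D ∈ T)
    (hAB : A ≠ B) (hCD : C ≠ D) (hv : o.1 ≤ v.1)
    (G H : ℝ × ℝ →ₗ[ℝ] ℝ) (hGA : G A = G v) (hGB : G B = G v)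
    (hBv : B ∈ segment ℝ A v) (hCv : C ∈ segment ℝ v D) (hGC : G C < G v) (hGD : G D < G v)
    (hG : ∀ z ∈ insert o T, z ≠ A → z ≠ B → G z ≠ G v) (hHD : H D = H v)
    (hH : ∀ z ∈ insert o T, z ≠ C → z ≠ D → G z < G v → H z < H v) : Good o T := by
  classical
  have hAC : A ≠ C := fun e => by rw [← e, hGA] at hGC; exact hGC.false
  have hAD : A ≠ D := fun e => by rw [← e, hGA] at hGD; exact hGD.false
  have hBC : B ≠ C := fun e => by rw [← e, hGB] at hGC; exact hGC.false
  have hBD : B ≠ D := fun e => by rw [← e, hGB] at hGD; exact hGD.false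
  have hAv : A ≠ v := by
    rintro rfl
    simp only [segment_same, Set.mem_singleton_iff] at hBv
    exact hAB hBv.symm
  have hvD : v ≠ D := by
    rintro rfl
    exact hGD.false
  have hne : ∀ z ∈ T, o ≠ z := fun z hz e => by
    have := hoT z hz
    simp [e] at this
  have hGo : G o ≠ G v := hG o (by simp) (hne A hA) (hne B hB)
  set Z : Finset (ℝ × ℝ) := T.filter (fun z => G v < G z) with hZ
  set W : Finset (ℝ × ℝ) :=
    ((((T.filter (fun z => ¬ G v < G z)).erase A).erase B).erase C).erase D with hW
  have hcard : Z.card + W.card + 4 = T.card := by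
    have h0 : Z.card + (T.filter (fun z => ¬ G v < G z)).card = T.card :=
      Finset.card_filter_add_card_filter_not (s := T) (fun z => G v < G z)
    have hA' : A ∈ T.filter (fun z => ¬ G v < G z) := by simp [hA, hGA]
    have hB' : B ∈ (T.filter (fun z => ¬ G v < G z)).erase A := by simp [hB, hGB, hAB.symm]
    have hC' : C ∈ ((T.filter (fun z => ¬ G v < G z)).erase A).erase B := by
      simp [hC, hGC.le, hAC.symm, hBC.symm]
    have hD' : D ∈ (((T.filter (fun z => ¬ G v < G z)).erase A).erase B).erase C := by
      simp [hD, hGD.le, hAD.symm, hBD.symm, hCD.symm]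
    have e1 := Finset.card_erase_add_one hA'
    have e2 := Finset.card_erase_add_one hB'
    have e3 := Finset.card_erase_add_one hC'
    have e4 : W.card + 1 = _ := Finset.card_erase_add_one hD'
    omega
  have hZm : ∀ z ∈ Z, z ∈ T ∧ G v < G z := fun z hz => by simpa [hZ] using hz
  have hWm : ∀ z ∈ W, z ∈ T ∧ z ≠ C ∧ z ≠ D ∧ G z < G v := fun z hz => by
    simp only [hW, Finset.mem_erase, Finset.mem_filter, not_lt] at hz
    obtain ⟨h1, h2, h3, h4, h5, h6⟩ := hz
    exact ⟨h5, h2, h1, lt_of_le_of_ne h6 (hG z (by simp [h5]) h4 h3)⟩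
  have hWH : ∀ z ∈ W, H z < H v := fun z hz => by
    obtain ⟨h1, h2, h3, h4⟩ := hWm z hz
    exact hH z (by simp [h1]) h2 h3 h4
  have hZinj : Set.InjOn Prod.fst (Z : Set (ℝ × ℝ)) := hinj.mono fun z hz => (hZm z hz).1
  have hWinj : Set.InjOn Prod.fst (W : Set (ℝ × ℝ)) := hinj.mono fun z hz => (hWm z hz).1
  have hcases : ∀ z ∈ T, z = A ∨ z = B ∨ z = C ∨ z = D ∨ z ∈ Z ∨ z ∈ W := by
    intro z hz
    simp only [hZ, hW, Finset.mem_filter, Finset.mem_erase]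
    tauto
  rcases lt_or_gt_of_ne hGo with ho | ho
  · -- `o` lies on the side of `C, D`: visit `W` first, then traverse `D`, `v`, `A`
    have hoH : H o < H v := hH o (by simp) (hne C hC) (hne D hD) ho
    obtain ⟨L₁, hp₁, hP₁⟩ := exists_ham_path H D _ W o rfl hWinj (hoT D hD) (by rwa [hHD])
      (fun z hz => hoT z (hWm z hz).1) (fun z hz => by rw [hHD]; exact hWH z hz)
    obtain ⟨L₂, hp₂, hP₂⟩ := exists_peel_path G Z A hZinj
      (fun z hz => by rw [hGA]; exact (hZm z hz).2)
    have hm₁ : ∀ z, z ∈ L₁ ↔ z ∈ W := fun z => by rw [hp₁.mem_iff, Finset.mem_toList]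
    have hm₂ : ∀ z, z ∈ L₂ ↔ z ∈ Z := fun z => by rw [hp₂.mem_iff, Finset.mem_toList]
    have hge : pathSet (v :: A :: L₂) ⊆ {x | G v ≤ G x} := by
      refine pathSet_subset (convex_ge_fun _ _) ?_
      simp only [List.mem_cons, Set.mem_ofPred_eq]
      rintro x (rfl | rfl | hx)
      · exact le_rfl
      · exact hGA.ge
      · exact (hZm x ((hm₂ x).1 hx)).2.le
    have hlt : pathSet ((o :: L₁) ++ [D]) ⊆ {x | G x < G v} := by
      refine pathSet_subset (convex_lt_fun _ _) ?_
      simp only [List.cons_append, List.mem_cons, List.mem_append, List.not_mem_nil, or_false]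
      rintro x (rfl | hx | rfl)
      · exact ho
      · exact (hWm x ((hm₁ x).1 hx)).2.2.2
      · exact hGD
    refine ⟨L₁ ++ D :: v :: A :: L₂, ?_, ?_, ?_, ?_⟩
    · refine nc_append D (v :: A :: L₂) (o :: L₁) hP₁.nc ⟨hvD.symm, ?_, hAv.symm, ?_, hP₂.nc⟩ ?_
      · rintro y ⟨hy, hy'⟩
        exact eq_right_of_mem_segment G hGD hy (hge hy')
      · rintro y ⟨hy, hy'⟩
        have := map_eq_of_mem_segment G hGA.symm hy
        refine eq_head_of_mem G ?_ hy' this.le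
        intro z hz
        rw [hGA]
        exact (hZm z ((hm₂ z).1 hz)).2
      · rintro y ⟨hy, hy' | hy'⟩
        · rw [segment_symm] at hy'
          have := map_eq_of_mem_segment H hHD.symm hy'
          refine eq_last_of_mem H ?_ hy this.ge
          intro z hz
          rw [hHD]
          rcases List.mem_cons.1 hz with rfl | hz
          · exact hoH
          · exact hWH z ((hm₁ z).1 hz)
        · exact absurd (show G y < G v from hlt hy) (not_lt.2 (hge hy'))
    · have l1 := hp₁.length_eq
      have l2 := hp₂.length_eq
      simp only [Finset.length_toList] at l1 l2
      simp only [List.length_append, List.length_cons]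
      omega
    · intro p hp
      have key := pathSet_append D (v :: A :: L₂) (o :: L₁)
      rw [List.cons_append] at key
      rcases hcases p hp with rfl | rfl | rfl | rfl | h | h
      · exact mem_pathSet (by simp)
      · rw [key]
        rw [segment_symm] at hBv
        exact Or.inr (Or.inr (Or.inl hBv))
      · rw [key]
        rw [segment_symm] at hCv
        exact Or.inr (Or.inl hCv)
      · exact mem_pathSet (by simp)
      · exact mem_pathSet (by simp [(hm₂ p).2 h])
      · exact mem_pathSet (by simp [(hm₁ p).2 h])
    · simp only [List.mem_append, List.mem_cons]
      rintro p (h | rfl | rfl | rfl | h)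
      · exact (hoT p (hWm p ((hm₁ p).1 h)).1).le
      · exact (hoT p hD).le
      · exact hv
      · exact (hoT p hA).le
      · exact (hoT p (hZm p ((hm₂ p).1 h)).1).le
  · -- `o` lies on the other side: visit `Z` first, then traverse `A`, `v`, `D`
    obtain ⟨L₁, hp₁, hP₁⟩ := exists_ham_path (-G) A _ Z o rfl hZinj (hoT A hA)
      (by simpa [hGA] using ho) (fun z hz => hoT z (hZm z hz).1)
      (fun z hz => by simpa [hGA] using (hZm z hz).2)
    obtain ⟨L₂, hp₂, hP₂⟩ := exists_peel_path (-H) W D hWinj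
      (fun z hz => by simpa [hHD] using hWH z hz)
    have hm₁ : ∀ z, z ∈ L₁ ↔ z ∈ Z := fun z => by rw [hp₁.mem_iff, Finset.mem_toList]
    have hm₂ : ∀ z, z ∈ L₂ ↔ z ∈ W := fun z => by rw [hp₂.mem_iff, Finset.mem_toList]
    have hle : pathSet (A :: v :: D :: L₂) ⊆ {x | G x ≤ G v} := by
      refine pathSet_subset (convex_le_fun _ _) ?_
      simp only [List.mem_cons, Set.mem_ofPred_eq]
      rintro x (rfl | rfl | rfl | hx)
      · exact hGA.le
      · exact le_rfl
      · exact hGD.le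
      · exact (hWm x ((hm₂ x).1 hx)).2.2.2.le
    refine ⟨L₁ ++ A :: v :: D :: L₂, ?_, ?_, ?_, ?_⟩
    · refine nc_append A (v :: D :: L₂) (o :: L₁) hP₁.nc ⟨hAv, ?_, hvD, ?_, hP₂.nc⟩ ?_
      · rintro y ⟨hy, hy'⟩
        have := map_eq_of_mem_segment G hGA hy
        refine eq_head_of_mem (-G) ?_ hy' (by simpa using this.ge)
        intro z hz
        rcases List.mem_cons.1 hz with rfl | hz
        · simpa using hGD
        · simpa using (hWm z ((hm₂ z).1 hz)).2.2.2
      · rintro y ⟨hy, hy'⟩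
        have := map_eq_of_mem_segment H hHD.symm hy
        refine eq_head_of_mem (-H) ?_ hy' (by simpa using this.ge)
        intro z hz
        simpa [hHD] using hWH z ((hm₂ z).1 hz)
      · rintro y ⟨hy, hy'⟩
        refine eq_last_of_mem (-G) ?_ hy (by simpa [hGA] using hle hy')
        intro z hz
        rcases List.mem_cons.1 hz with rfl | hz
        · simpa [hGA] using ho
        · simpa [hGA] using (hZm z ((hm₁ z).1 hz)).2
    · have l1 := hp₁.length_eq
      have l2 := hp₂.length_eq
      simp only [Finset.length_toList] at l1 l2
      simp only [List.length_append, List.length_cons]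
      omega
    · intro p hp
      have key := pathSet_append A (v :: D :: L₂) (o :: L₁)
      rw [List.cons_append] at key
      rcases hcases p hp with rfl | rfl | rfl | rfl | h | h
      · exact mem_pathSet (by simp)
      · rw [key]
        exact Or.inr (Or.inl hBv)
      · rw [key]
        exact Or.inr (Or.inr (Or.inl hCv))
      · exact mem_pathSet (by simp)
      · exact mem_pathSet (by simp [(hm₁ p).2 h])
      · exact mem_pathSet (by simp [(hm₂ p).2 h])
    · simp only [List.mem_append, List.mem_cons]
      rintro p (h | rfl | rfl | rfl | h)
      · exact (hoT p (hZm p ((hm₁ p).1 h)).1).le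
      · exact (hoT p hA).le
      · exact hv
      · exact (hoT p hD).le
      · exact (hoT p (hWm p ((hm₂ p).1 h)).1).le

/-! ### Three collinear points -/

/-- A path from `a` to `c` passes every abscissa between those of `a` and `c`. -/
lemma exists_mem_pathSet_fst {c : ℝ × ℝ} {t : ℝ} (hc : t ≤ c.1) : ∀ (L : List (ℝ × ℝ))
    (a : ℝ × ℝ), a.1 ≤ t → ∃ y ∈ pathSet (a :: (L ++ [c])), y.1 = t := by
  have seg : ∀ a b : ℝ × ℝ, a.1 ≤ t → t ≤ b.1 → ∃ y ∈ segment ℝ a b, y.1 = t := by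
    intro a b ha hb
    have h : t ∈ segment ℝ a.1 b.1 := by
      rw [segment_eq_Icc (ha.trans hb)]
      exact ⟨ha, hb⟩
    obtain ⟨p, q, hp, hq, hpq, e⟩ := h
    exact ⟨p • a + q • b, ⟨p, q, hp, hq, hpq, rfl⟩, by simpa using e⟩
  intro L
  induction L with
  | nil =>
    intro a ha
    obtain ⟨y, hy, e⟩ := seg a c ha hc
    exact ⟨y, Or.inl hy, e⟩
  | cons b L ih =>
    intro a ha
    rcases le_total t b.1 with h | h
    · obtain ⟨y, hy, e⟩ := seg a b ha h
      exact ⟨y, Or.inl hy, e⟩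
    · obtain ⟨y, hy, e⟩ := ih b h
      exact ⟨y, Or.inr hy, e⟩

/-- If three points of `T` lie on a line (a level set of `G` with `o` not above it), walk along
the line from its leftmost point `a` of `T` to its rightmost point `c` of `T`, skipping one
intermediate point as a vertex. The points below the line are visited before, those above it
afterwards. -/
lemma good_of_collinear_aux {o : ℝ × ℝ} {T : Finset (ℝ × ℝ)}
    (hinj : Set.InjOn Prod.fst (T : Set (ℝ × ℝ))) (hoT : ∀ z ∈ T, o.1 < z.1)
    (G : ℝ × ℝ →ₗ[ℝ] ℝ) (hG : G (0, 1) ≠ 0) (γ : ℝ) (hoG : G o ≤ γ)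
    (hM : 3 ≤ (T.filter (fun z => G z = γ)).card) : Good o T := by
  classical
  set M := T.filter (fun z => G z = γ) with hMdef
  have hMm : ∀ z ∈ M, z ∈ T ∧ G z = γ := fun z hz => by simpa [hMdef] using hz
  obtain ⟨a, ha, hamin⟩ := M.exists_min_image Prod.fst (Finset.card_pos.1 (by omega))
  obtain ⟨c, hc', hcmax⟩ := (M.erase a).exists_max_image Prod.fst
    (Finset.card_pos.1 (by rw [Finset.card_erase_of_mem ha]; omega))
  obtain ⟨b, hb'⟩ : ((M.erase a).erase c).Nonempty := Finset.card_pos.1 (by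
    rw [Finset.card_erase_of_mem hc', Finset.card_erase_of_mem ha]; omega)
  have hcM : c ∈ M := Finset.mem_of_mem_erase hc'
  have hlt : ∀ z ∈ M, z ≠ a → a.1 < z.1 := fun z hz hza =>
    lt_of_le_of_ne (hamin z hz) fun e => hza (hinj (hMm z hz).1 (hMm a ha).1 e.symm)
  have hgt : ∀ z ∈ M, z ≠ a → z ≠ c → z.1 < c.1 := fun z hz hza hzc =>
    lt_of_le_of_ne (hcmax z (Finset.mem_erase.2 ⟨hza, hz⟩))
      fun e => hzc (hinj (hMm z hz).1 (hMm c hcM).1 e)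
  have hac : a.1 < c.1 := hlt c hcM (Finset.ne_of_mem_erase hc')
  have hbc : b ≠ c := Finset.ne_of_mem_erase hb'
  have hba : b ≠ a := Finset.ne_of_mem_erase (Finset.mem_of_mem_erase hb')
  have hbM : b ∈ M := Finset.mem_of_mem_erase (Finset.mem_of_mem_erase hb')
  set N := ((M.erase a).erase c).erase b with hN
  have hNm : ∀ z ∈ N, z ∈ M ∧ z ≠ a ∧ z ≠ c := fun z hz => by
    simp only [hN, Finset.mem_erase] at hz
    tauto
  set Z := T.filter (fun z => G z < γ) with hZ
  set P := T.filter (fun z => γ < G z) with hP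
  have hZm : ∀ z ∈ Z, z ∈ T ∧ G z < γ := fun z hz => by simpa [hZ] using hz
  have hPm : ∀ z ∈ P, z ∈ T ∧ γ < G z := fun z hz => by simpa [hP] using hz
  have hcases : ∀ z ∈ T, z = a ∨ z = b ∨ z = c ∨ z ∈ N ∨ z ∈ Z ∨ z ∈ P := by
    intro z hz
    simp only [hZ, hN, hP, hMdef, Finset.mem_filter, Finset.mem_erase]
    rcases lt_trichotomy (G z) γ with h | h | h <;> tauto
  have hcard : Z.card + N.card + P.card + 3 = T.card := by
    have e1 := Finset.card_erase_add_one ha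
    have e2 := Finset.card_erase_add_one hc'
    have e3 : N.card + 1 = _ := Finset.card_erase_add_one hb'
    have d1 : M.card + (T.filter (fun z => ¬ G z = γ)).card = T.card :=
      Finset.card_filter_add_card_filter_not (s := T) (fun z => G z = γ)
    have d2 := Finset.card_filter_add_card_filter_not (s := T.filter (fun z => ¬ G z = γ))
      (fun z => G z < γ)
    have f1 : (T.filter (fun z => ¬ G z = γ)).filter (fun z => G z < γ) = Z := by
      ext z
      simp only [hZ, Finset.mem_filter]
      exact ⟨fun h => ⟨h.1.1, h.2⟩, fun h => ⟨⟨h.1, h.2.ne⟩, h.2⟩⟩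
    have f2 : (T.filter (fun z => ¬ G z = γ)).filter (fun z => ¬ G z < γ) = P := by
      ext z
      simp only [hP, Finset.mem_filter]
      exact ⟨fun h => ⟨h.1.1, lt_of_le_of_ne (not_lt.1 h.2) (Ne.symm h.1.2)⟩,
        fun h => ⟨⟨h.1, h.2.ne'⟩, h.2.not_gt⟩⟩
    rw [f1, f2] at d2
    omega
  -- tilt `G` so that `a` is the unique lowest point of the line
  obtain ⟨δ, hδ, hpert⟩ := exists_perturb G (LinearMap.fst ℝ ℝ ℝ) (insert o T)
  set G' := G + δ • LinearMap.fst ℝ ℝ ℝ with hG'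
  have haT : a ∈ insert o T := by simp [(hMm a ha).1]
  have hGa : G a = γ := (hMm a ha).2
  have hZ' : ∀ z ∈ Z, G' z < G' a := fun z hz =>
    hpert z (by simp [(hZm z hz).1]) a haT (by rw [hGa]; exact (hZm z hz).2)
  have hP' : ∀ z ∈ P, G' a < G' z := fun z hz =>
    hpert a haT z (by simp [(hPm z hz).1]) (by rw [hGa]; exact (hPm z hz).2)
  have hM' : ∀ z ∈ M, G' a ≤ G' z := fun z hz => by
    simp only [hG', LinearMap.add_apply, LinearMap.smul_apply, LinearMap.fst_apply, smul_eq_mul,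
      (hMm z hz).2, hGa]
    have := hamin z hz
    gcongr
  have ho' : G' o < G' a := by
    rcases lt_or_eq_of_le hoG with h | h
    · exact hpert o (by simp) a haT (by rwa [hGa])
    · simp only [hG', LinearMap.add_apply, LinearMap.smul_apply, LinearMap.fst_apply, smul_eq_mul,
        h, hGa]
      have := hoT a (hMm a ha).1
      gcongr
  obtain ⟨L₁, hp₁, hP₁⟩ := exists_ham_path G' a _ Z o rfl
    (hinj.mono fun z hz => (hZm z hz).1) (hoT a (hMm a ha).1) ho'
    (fun z hz => hoT z (hZm z hz).1) hZ'
  obtain ⟨L₂, hp₂, hP₂⟩ := exists_ham_path (LinearMap.fst ℝ ℝ ℝ) c _ N a rfl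
    (hinj.mono fun z hz => (hMm z (hNm z hz).1).1) hac hac
    (fun z hz => hlt z (hNm z hz).1 (hNm z hz).2.1)
    (fun z hz => hgt z (hNm z hz).1 (hNm z hz).2.1 (hNm z hz).2.2)
  obtain ⟨L₃, hp₃, hP₃⟩ := exists_peel_path G P c
    (hinj.mono fun z hz => (hPm z hz).1)
    (fun z hz => by rw [(hMm c hcM).2]; exact (hPm z hz).2)
  have hm₁ : ∀ z, z ∈ L₁ ↔ z ∈ Z := fun z => by rw [hp₁.mem_iff, Finset.mem_toList]
  have hm₂ : ∀ z, z ∈ L₂ ↔ z ∈ N := fun z => by rw [hp₂.mem_iff, Finset.mem_toList]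
  have hm₃ : ∀ z, z ∈ L₃ ↔ z ∈ P := fun z => by rw [hp₃.mem_iff, Finset.mem_toList]
  have hline : ∀ x ∈ (a :: L₂) ++ [c], x ∈ M := by
    simp only [List.cons_append, List.mem_cons, List.mem_append, List.not_mem_nil, or_false]
    rintro x (rfl | hx | rfl)
    · exact ha
    · exact (hNm x ((hm₂ x).1 hx)).1
    · exact hcM
  have hle : pathSet ((a :: L₂) ++ [c]) ⊆ {x | G x ≤ γ} :=
    pathSet_subset (convex_le_fun _ _) fun x hx => (hMm x (hline x hx)).2.le
  have hge : pathSet ((a :: L₂) ++ [c]) ⊆ {x | γ ≤ G x} :=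
    pathSet_subset (convex_ge_fun _ _) fun x hx => (hMm x (hline x hx)).2.ge
  have hge' : pathSet (a :: (L₂ ++ c :: L₃)) ⊆ {x | G' a ≤ G' x} := by
    refine pathSet_subset (convex_ge_fun _ _) ?_
    simp only [List.mem_cons, List.mem_append]
    rintro x (rfl | hx | rfl | hx)
    · exact le_refl (G' x)
    · exact hM' x (hNm x ((hm₂ x).1 hx)).1
    · exact hM' x hcM
    · exact (hP' x ((hm₃ x).1 hx)).le
  have hb : b ∈ pathSet ((a :: L₂) ++ [c]) := by
    obtain ⟨y, hy, e⟩ := exists_mem_pathSet_fst (hgt b hbM hba hbc).le L₂ a (hamin b hbM)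
    have hGy : G y = γ := le_antisymm (hle hy) (hge hy)
    have hyb : y = b := by
      have h1 : y - b = (y.2 - b.2) • ((0, 1) : ℝ × ℝ) := by
        ext <;> simp [e]
      have h2 : G (y - b) = 0 := by rw [map_sub, hGy, (hMm b hbM).2, sub_self]
      rw [h1, map_smul, smul_eq_mul, mul_eq_zero, or_iff_left hG] at h2
      rw [h2, zero_smul, sub_eq_zero] at h1
      exact h1
    rw [← hyb]
    exact hy
  refine ⟨L₁ ++ a :: (L₂ ++ c :: L₃), ?_, ?_, ?_, ?_⟩
  · refine nc_append a (L₂ ++ c :: L₃) (o :: L₁) hP₁.nc ?_ ?_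
    · refine nc_append c L₃ (a :: L₂) hP₂.nc hP₃.nc ?_
      rintro y ⟨hy, hy'⟩
      refine eq_head_of_mem G ?_ hy' ?_
      · intro z hz
        rw [(hMm c hcM).2]
        exact (hPm z ((hm₃ z).1 hz)).2
      · rw [(hMm c hcM).2]
        exact hle hy
    · rintro y ⟨hy, hy'⟩
      refine eq_last_of_mem G' ?_ hy (hge' hy')
      intro z hz
      rcases List.mem_cons.1 hz with rfl | hz
      · exact ho'
      · exact hZ' z ((hm₁ z).1 hz)
  · have l1 := hp₁.length_eq
    have l2 := hp₂.length_eq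
    have l3 := hp₃.length_eq
    simp only [Finset.length_toList] at l1 l2 l3
    simp only [List.length_append, List.length_cons]
    omega
  · intro p hp
    rcases hcases p hp with rfl | rfl | rfl | h | h | h
    · exact mem_pathSet (by simp)
    · have k1 := pathSet_append a (L₂ ++ c :: L₃) (o :: L₁)
      have k2 := pathSet_append c L₃ (a :: L₂)
      rw [List.cons_append] at k1
      rw [List.cons_append] at k2
      rw [k1, k2]
      exact Or.inr (Or.inl hb)
    · exact mem_pathSet (by simp)
    · exact mem_pathSet (by simp [(hm₂ p).2 h])
    · exact mem_pathSet (by simp [(hm₁ p).2 h])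
    · exact mem_pathSet (by simp [(hm₃ p).2 h])
  · simp only [List.mem_append, List.mem_cons]
    rintro p (h | rfl | h | rfl | h)
    · exact (hoT p (hZm p ((hm₁ p).1 h)).1).le
    · exact (hoT p (hMm p ha).1).le
    · exact (hoT p (hMm p (hNm p ((hm₂ p).1 h)).1).1).le
    · exact (hoT p (hMm p hcM).1).le
    · exact (hoT p (hPm p ((hm₃ p).1 h)).1).le

/-! ### Orientations and corners at four-point caps and cups -/

/-- Twice the signed area of the triangle `a b c`. -/
def orient (a b c : ℝ × ℝ) : ℝ := (b.1 - a.1) * (c.2 - a.2) - (b.2 - a.2) * (c.1 - a.1)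

/-- The linear functional whose level sets are the parallels to the line `a b`. -/
def lin (a b : ℝ × ℝ) : ℝ × ℝ →ₗ[ℝ] ℝ :=
  (b.1 - a.1) • LinearMap.snd ℝ ℝ ℝ - (b.2 - a.2) • LinearMap.fst ℝ ℝ ℝ

lemma lin_apply (a b z : ℝ × ℝ) : lin a b z = (b.1 - a.1) * z.2 - (b.2 - a.2) * z.1 := by
  simp [lin]

lemma lin_eq (a b z : ℝ × ℝ) : lin a b z = lin a b a + orient a b z := by
  simp only [lin_apply, orient]
  ring

/-- Four points `A, B, C, D` from left to right that form a cap (`s = 1`) or a cup (`s = -1`)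
give a corner at the intersection `v` of the lines `A B` and `C D`, as soon as all other points
on the `C`-side of the line `A B` lie on a common side of the line `C D`. -/
lemma good_of_cap {o : ℝ × ℝ} {T : Finset (ℝ × ℝ)}
    (hinj : Set.InjOn Prod.fst (T : Set (ℝ × ℝ))) (hoT : ∀ z ∈ T, o.1 < z.1)
    {A B C D : ℝ × ℝ} (hA : A ∈ T) (hB : B ∈ T) (hC : C ∈ T) (hD : D ∈ T)
    (hAB : A.1 < B.1) (hBC : B.1 < C.1) (hCD : C.1 < D.1) {s e : ℝ}
    (hs : s = 1 ∨ s = -1) (h1 : s * orient A B C < 0) (h2 : s * orient B C D < 0)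
    (hgp : ∀ z ∈ insert o T, z ≠ A → z ≠ B → orient A B z ≠ 0)
    (hside : ∀ z ∈ insert o T, z ≠ C → z ≠ D → s * orient A B z < 0 → e * orient C D z < 0) :
    Good o T := by
  obtain ⟨k, hk⟩ : ∃ k, k = (B.1 - A.1) * (D.2 - C.2) - (B.2 - A.2) * (D.1 - C.1) := ⟨_, rfl⟩
  have hs0 : s ≠ 0 := by rcases hs with rfl | rfl <;> norm_num
  have hkid : (C.1 - B.1) * (s * k) =
      (D.1 - C.1) * (s * orient A B C) + (B.1 - A.1) * (s * orient B C D) := by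
    rw [hk]; simp only [orient]; ring
  have hsk : s * k < 0 := by
    have : (C.1 - B.1) * (s * k) < 0 := by
      rw [hkid]
      nlinarith [mul_pos (sub_pos.2 hCD) (neg_pos.2 h1), mul_pos (sub_pos.2 hAB) (neg_pos.2 h2)]
    by_contra hcon
    nlinarith [mul_nonneg (sub_pos.2 hBC).le (not_lt.1 hcon)]
  have hk0 : k ≠ 0 := fun h => by simp [h] at hsk
  obtain ⟨t, ht⟩ : ∃ t, t = orient A B C / k := ⟨_, rfl⟩
  obtain ⟨τ, hτ⟩ : ∃ τ, τ = orient C D A / k := ⟨_, rfl⟩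
  have ht0 : 0 < t := by
    rw [ht, ← mul_div_mul_left _ _ hs0]
    exact div_pos_of_neg_of_neg h1 hsk
  have hτ1 : 1 ≤ τ := by
    have : τ = 1 + (s * orient B C D) / (s * k) := by
      rw [hτ, mul_div_mul_left _ _ hs0, eq_comm, ← div_self hk0, ← add_div]
      congr 1
      rw [hk]; simp only [orient]; ring
    rw [this]
    linarith [div_pos_of_neg_of_neg h2 hsk]
  have htk : t * k = orient A B C := by rw [ht]; field_simp
  have hτk : τ * k = orient C D A := by rw [hτ]; field_simp
  obtain ⟨v, hv⟩ : ∃ v : ℝ × ℝ, v = C - t • (D - C) := ⟨_, rfl⟩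
  have hv' : v = A + τ • (B - A) := by
    rw [hv]
    ext
    · refine mul_right_cancel₀ hk0 ?_
      simp only [Prod.fst_sub, Prod.smul_fst, Prod.fst_add, smul_eq_mul]
      linear_combination - (D.1 - C.1) * htk - (B.1 - A.1) * hτk +
        (by rw [hk]; simp only [orient]; ring :
          (C.1 - A.1) * k - (D.1 - C.1) * orient A B C - (B.1 - A.1) * orient C D A = 0)
    · refine mul_right_cancel₀ hk0 ?_
      simp only [Prod.snd_sub, Prod.smul_snd, Prod.snd_add, smul_eq_mul]
      linear_combination - (D.2 - C.2) * htk - (B.2 - A.2) * hτk +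
        (by rw [hk]; simp only [orient]; ring :
          (C.2 - A.2) * k - (D.2 - C.2) * orient A B C - (B.2 - A.2) * orient C D A = 0)
  have hABv : lin A B v = lin A B A := by
    rw [hv']; simp only [lin_apply, Prod.fst_add, Prod.snd_add, Prod.smul_fst, Prod.smul_snd,
      Prod.fst_sub, Prod.snd_sub, smul_eq_mul]; ring
  have hCDv : lin C D v = lin C D C := by
    rw [hv]; simp only [lin_apply, Prod.smul_fst, Prod.smul_snd,
      Prod.fst_sub, Prod.snd_sub, smul_eq_mul]; ring
  have hne : ∀ {p q : ℝ × ℝ}, p.1 < q.1 → p ≠ q := fun h e => by simp [e] at h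
  have hGz : ∀ z, (s • lin A B) z = (s • lin A B) v + s * orient A B z := fun z => by
    simp only [LinearMap.smul_apply, smul_eq_mul, hABv]
    rw [lin_eq A B z]; ring
  have hHz : ∀ z, (e • lin C D) z = (e • lin C D) v + e * orient C D z := fun z => by
    simp only [LinearMap.smul_apply, smul_eq_mul, hCDv]
    rw [lin_eq C D z]; ring
  refine good_of_corner hinj hoT hA hB hC hD (hne hAB) (hne hCD) (v := v) ?_
    (s • lin A B) (e • lin C D) ?_ ?_ ?_ ?_ ?_ ?_ ?_ ?_ ?_
  · have := hoT A hA
    rw [hv']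
    simp only [Prod.fst_add, Prod.smul_fst, Prod.fst_sub, smul_eq_mul]
    nlinarith
  · rw [hGz A]; simp [orient]
  · rw [hGz B]; simp only [orient]; ring
  · have hτ0 : 0 < τ := by linarith
    refine ⟨1 - 1 / τ, 1 / τ, ?_, by positivity, by ring, ?_⟩
    · rw [sub_nonneg, div_le_one hτ0]; exact hτ1
    · rw [hv']
      ext <;> simp <;> field_simp <;> ring
  · refine ⟨1 / (1 + t), t / (1 + t), by positivity, by positivity, by field_simp, ?_⟩
    rw [hv]
    have : 1 + t ≠ 0 := by positivity
    ext <;> simp <;> field_simp <;> ring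
  · rw [hGz C]; linarith
  · rw [hGz D]
    have : orient A B D = orient A B C + k := by rw [hk]; simp only [orient]; ring
    rw [this]
    linarith
  · intro z hz hzA hzB e
    rw [hGz z] at e
    have : s * orient A B z = 0 := by linarith
    exact hgp z hz hzA hzB ((mul_eq_zero.1 this).resolve_left hs0)
  · rw [hHz D]; simp only [orient]; ring
  · intro z hz hzC hzD hlt
    rw [hGz z] at hlt
    rw [hHz z]
    linarith [hside z hz hzC hzD (by linarith)]

/-! ### Point sequences sorted by abscissa -/

/-- `P 0, …, P (n - 1)` are sorted from left to right, and no three of them are collinear. -/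
structure Config (P : ℕ → ℝ × ℝ) (n : ℕ) : Prop where
  mono : ∀ i j, i < j → j < n → (P i).1 < (P j).1
  gp : ∀ i j k, i < j → j < k → k < n → orient (P i) (P j) (P k) ≠ 0

/-- The points after `P i`. -/
noncomputable def tailSet (P : ℕ → ℝ × ℝ) (n i : ℕ) : Finset (ℝ × ℝ) :=
  (Finset.Ioo i n).image P

lemma orient_rotate (a b c : ℝ × ℝ) : orient a b c = orient b c a := by
  simp only [orient]; ring

lemma orient_swap (a b c : ℝ × ℝ) : orient a b c = -orient b a c := by
  simp only [orient]; ring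

namespace Config

variable {P : ℕ → ℝ × ℝ} {n : ℕ}

lemma gp' (hP : Config P n) {i j k : ℕ} (hi : i < n) (hj : j < n) (hk : k < n) (hij : i ≠ j)
    (hik : i ≠ k) (hjk : j ≠ k) : orient (P i) (P j) (P k) ≠ 0 := by
  rcases lt_or_gt_of_ne hij with h1 | h1 <;> rcases lt_or_gt_of_ne hik with h2 | h2 <;>
    rcases lt_or_gt_of_ne hjk with h3 | h3 <;> try omega
  · exact hP.gp i j k h1 h3 hk
  · rw [orient_rotate, orient_swap, orient_rotate, orient_rotate, neg_ne_zero]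
    exact hP.gp i k j h2 h3 hj
  · rw [orient_rotate, orient_rotate]
    exact hP.gp k i j h2 h1 hj
  · rw [orient_swap, neg_ne_zero]
    exact hP.gp j i k h1 h2 hk
  · rw [orient_rotate]
    exact hP.gp j k i h3 h2 hi
  · rw [orient_rotate, orient_swap, neg_ne_zero]
    exact hP.gp k j i h3 h1 hi

lemma injOn_tail (hP : Config P n) (i : ℕ) :
    Set.InjOn Prod.fst (tailSet P n i : Set (ℝ × ℝ)) := by
  intro p hp q hq e
  simp only [tailSet, Finset.coe_image, Set.mem_image, Finset.coe_Ioo, Set.mem_Ioo] at hp hq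
  obtain ⟨a, ha, rfl⟩ := hp
  obtain ⟨b, hb, rfl⟩ := hq
  rcases lt_trichotomy a b with h | rfl | h
  · exact absurd e (hP.mono a b h hb.2).ne
  · rfl
  · exact absurd e (hP.mono b a h ha.2).ne'

lemma lt_tail (hP : Config P n) (i : ℕ) : ∀ z ∈ tailSet P n i, (P i).1 < z.1 := by
  intro z hz
  simp only [tailSet, Finset.mem_image, Finset.mem_Ioo] at hz
  obtain ⟨a, ha, rfl⟩ := hz
  exact hP.mono i a ha.1 ha.2

/-- Among the points with indices in `S`, the one seen from `P b` under the largest (`s = 1`) or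
the smallest (`s = -1`) slope. -/
lemma exists_extreme (hP : Config P n) {s : ℝ} (hs : s = 1 ∨ s = -1) (b : ℕ) (S : Finset ℕ)
    (hS : S.Nonempty) (hb : ∀ X ∈ S, b < X ∧ X < n) :
    ∃ c ∈ S, ∀ X ∈ S, X ≠ c → s * orient (P b) (P c) (P X) < 0 := by
  obtain ⟨c, hc, hmax⟩ :=
    S.exists_max_image (fun X => s * (((P X).2 - (P b).2) / ((P X).1 - (P b).1))) hS
  refine ⟨c, hc, fun X hX hXc => ?_⟩
  have h1 := hP.mono b c (hb c hc).1 (hb c hc).2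
  have h2 := hP.mono b X (hb X hX).1 (hb X hX).2
  have h1' := sub_pos.2 h1
  have h2' := sub_pos.2 h2
  have key : s * orient (P b) (P c) (P X) = ((P c).1 - (P b).1) * ((P X).1 - (P b).1) *
      (s * (((P X).2 - (P b).2) / ((P X).1 - (P b).1)) -
        s * (((P c).2 - (P b).2) / ((P c).1 - (P b).1))) := by
    simp only [orient]
    field_simp
  have hle : s * orient (P b) (P c) (P X) ≤ 0 := by
    rw [key]
    exact mul_nonpos_of_nonneg_of_nonpos (by positivity) (sub_nonpos.2 (hmax X hX))
  refine lt_of_le_of_ne hle (mul_ne_zero ?_ ?_)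
  · rcases hs with rfl | rfl <;> norm_num
  · exact hP.gp' ((hb c hc).1.trans (hb c hc).2) (hb c hc).2 (hb X hX).2
      (hb c hc).1.ne (hb X hX).1.ne hXc.symm

/-- `good_of_cap` for four points of the sequence. -/
lemma good_of_cap (hP : Config P n) {i A B C D : ℕ} (hiA : i < A) (hAB : A < B) (hBC : B < C)
    (hCD : C < D) (hD : D < n) {s e : ℝ} (hs : s = 1 ∨ s = -1)
    (h1 : s * orient (P A) (P B) (P C) < 0) (h2 : s * orient (P B) (P C) (P D) < 0)
    (hside : ∀ z, i ≤ z → z < n → z ≠ C → z ≠ D → s * orient (P A) (P B) (P z) < 0 →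
      e * orient (P C) (P D) (P z) < 0) : Good (P i) (tailSet P n i) := by
  have hmem : ∀ j, i < j → j < n → P j ∈ tailSet P n i := fun j h h' =>
    Finset.mem_image.2 ⟨j, Finset.mem_Ioo.2 ⟨h, h'⟩, rfl⟩
  have hidx : ∀ z ∈ insert (P i) (tailSet P n i), ∃ j, i ≤ j ∧ j < n ∧ z = P j := by
    intro z hz
    rcases Finset.mem_insert.1 hz with rfl | hz
    · exact ⟨i, le_rfl, by omega, rfl⟩
    · simp only [tailSet, Finset.mem_image, Finset.mem_Ioo] at hz
      obtain ⟨j, hj, rfl⟩ := hz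
      exact ⟨j, hj.1.le, hj.2, rfl⟩
  refine _root_.good_of_cap (hP.injOn_tail i) (hP.lt_tail i) (hmem A (by omega) (by omega))
    (hmem B (by omega) (by omega)) (hmem C (by omega) (by omega)) (hmem D (by omega) (by omega))
    (hP.mono A B hAB (by omega)) (hP.mono B C hBC (by omega)) (hP.mono C D hCD hD) hs h1 h2
    (e := e) ?_ ?_
  · intro z hz hzA hzB
    obtain ⟨j, hj, hj', rfl⟩ := hidx z hz
    exact hP.gp' (by omega) (by omega) hj' hAB.ne (fun h => hzA (by rw [h]))
      (fun h => hzB (by rw [h]))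
  · intro z hz hzC hzD
    obtain ⟨j, hj, hj', rfl⟩ := hidx z hz
    exact hside j hj hj' (fun h => hzC (by rw [h])) (fun h => hzD (by rw [h]))

/-- A cap (`s = 1`) or cup (`s = -1`) `A, B, C, D` such that every point to the right of `D` is
on the other side of the line `A B` suffices: replace `C, D` by two consecutive edges of the
hull of the points on the `C`-side of the line `A B` and to the right of `B`. -/
lemma good_of_cap_of_right (hP : Config P n) {i A B C D : ℕ} (hiA : i < A) (hAB : A < B)
    (hBC : B < C) (hCD : C < D) (hD : D < n) {s : ℝ} (hs : s = 1 ∨ s = -1)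
    (h1 : s * orient (P A) (P B) (P C) < 0) (h2 : s * orient (P B) (P C) (P D) < 0)
    (hright : ∀ X, D < X → X < n → 0 < s * orient (P A) (P B) (P X)) :
    Good (P i) (tailSet P n i) := by
  have hAB' := hP.mono A B hAB (by omega)
  have hBC' := hP.mono B C hBC (by omega)
  have hCD' := hP.mono C D hCD (by omega)
  have hABD : s * orient (P A) (P B) (P D) < 0 := by
    have key : ((P C).1 - (P B).1) * (s * orient (P A) (P B) (P D)) =
        ((P D).1 - (P B).1) * (s * orient (P A) (P B) (P C)) +
        ((P B).1 - (P A).1) * (s * orient (P B) (P C) (P D)) := by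
      simp only [orient]; ring
    nlinarith
  set W := (Finset.Ioo B n).filter (fun X => s * orient (P A) (P B) (P X) < 0) with hW
  have hCW : C ∈ W := by simp only [hW, Finset.mem_filter, Finset.mem_Ioo]; exact ⟨by omega, h1⟩
  have hDW : D ∈ W := by simp only [hW, Finset.mem_filter, Finset.mem_Ioo]; exact ⟨by omega, hABD⟩
  have hWD : ∀ X ∈ W, B < X ∧ X ≤ D ∧ s * orient (P A) (P B) (P X) < 0 := by
    intro X hX
    simp only [hW, Finset.mem_filter, Finset.mem_Ioo] at hX
    refine ⟨hX.1.1, ?_, hX.2⟩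
    by_contra hcon
    exact absurd hX.2 (hright X (by omega) hX.1.2).not_gt
  obtain ⟨c, hcW, hc⟩ := hP.exists_extreme hs B W ⟨C, hCW⟩
    (fun X hX => ⟨(hWD X hX).1, by have := (hWD X hX).2.1; omega⟩)
  have hcD : c < D := by
    refine lt_of_le_of_ne (hWD c hcW).2.1 ?_
    rintro rfl
    have := hc C hCW hCD.ne
    have e : orient (P B) (P c) (P C) = -orient (P B) (P C) (P c) := by
      simp only [orient]; ring
    rw [e] at this
    linarith
  have hBc := (hWD c hcW).1
  obtain ⟨d, hdW, hd⟩ := hP.exists_extreme hs c (W.filter (fun X => c < X))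
    ⟨D, by simp [hDW, hcD]⟩ (fun X hX => by
      rw [Finset.mem_filter] at hX
      exact ⟨hX.2, by have := (hWD X hX.1).2.1; omega⟩)
  rw [Finset.mem_filter] at hdW
  obtain ⟨hdW, hcd⟩ := hdW
  have hdD := (hWD d hdW).2.1
  have hBcd := hc d hdW hcd.ne'
  have hBc' := hP.mono B c hBc (by omega)
  have hcd' := hP.mono c d hcd (by omega)
  refine hP.good_of_cap hiA hAB hBc hcd (by omega) hs (e := s) (hWD c hcW).2.2 hBcd ?_
  intro z hiz hz hzc hzd hABz
  have hzB : z ≠ B := by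
    rintro rfl
    have e : orient (P A) (P z) (P z) = 0 := by simp only [orient]; ring
    simp [e] at hABz
  rcases lt_or_gt_of_ne hzB with hlt | hgt
  · -- in the case `s = 1`, the line through `c` and `d` passes above the line `A B` left of `B`
    have hzB' := hP.mono z B hlt (by omega)
    have hk : s * (((P B).1 - (P A).1) * ((P d).2 - (P c).2) -
        ((P B).2 - (P A).2) * ((P d).1 - (P c).1)) < 0 := by
      have key : ((P c).1 - (P B).1) * (s * (((P B).1 - (P A).1) * ((P d).2 - (P c).2) -
          ((P B).2 - (P A).2) * ((P d).1 - (P c).1))) =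
          ((P d).1 - (P c).1) * (s * orient (P A) (P B) (P c)) +
          ((P B).1 - (P A).1) * (s * orient (P B) (P c) (P d)) := by
        simp only [orient]; ring
      have := (hWD c hcW).2.2
      nlinarith
    have key : ((P B).1 - (P A).1) * (s * orient (P c) (P d) (P z)) =
        ((P B).1 - (P A).1) * (s * orient (P B) (P c) (P d)) +
        ((P B).1 - (P z).1) * (s * (((P B).1 - (P A).1) * ((P d).2 - (P c).2) -
          ((P B).2 - (P A).2) * ((P d).1 - (P c).1))) +
        ((P d).1 - (P c).1) * (s * orient (P A) (P B) (P z)) := by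
      simp only [orient]; ring
    nlinarith
  · have hzW : z ∈ W := by
      simp only [hW, Finset.mem_filter, Finset.mem_Ioo]
      exact ⟨⟨hgt, hz⟩, hABz⟩
    rcases lt_or_gt_of_ne hzc with hlt | hgt'
    · have hzc' := hP.mono z c hlt (by omega)
      have hBcz := hc z hzW hzc
      have key : ((P c).1 - (P B).1) * (s * orient (P c) (P d) (P z)) =
          ((P c).1 - (P z).1) * (s * orient (P B) (P c) (P d)) +
          ((P d).1 - (P c).1) * (s * orient (P B) (P c) (P z)) := by
        simp only [orient]; ring
      nlinarith
    · exact hd z (by simp [hzW, hgt']) hzd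

/-- A corner at four points after the start `P i`, three of them directly after it. In the case
`s = 1`, all points below the line through `P (i + 1)` and `P (i + 2)`, except for `P (i + 3)`, are
to the right of `P (i + 3)`, and the second edge leaves `P (i + 3)` in the direction of least slope
to a later point; for `s = -1` exchange above and below. -/
lemma good_of_turn (hP : Config P n) {i X : ℕ} {s : ℝ} (hs : s = 1 ∨ s = -1)
    (h0 : 0 < s * orient (P i) (P (i + 1)) (P (i + 2)))
    (h1 : s * orient (P (i + 1)) (P (i + 2)) (P (i + 3)) < 0) (hX : i + 3 < X) (hXn : X < n)
    (h2 : s * orient (P (i + 2)) (P (i + 3)) (P X) < 0) : Good (P i) (tailSet P n i) := by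
  obtain ⟨d, hdm, hd⟩ := hP.exists_extreme (s := -s) (by rcases hs with rfl | rfl <;> simp)
    (i + 3) (Finset.Ioo (i + 3) n) ⟨X, by simp [hX, hXn]⟩ (fun X hX => by simpa using hX)
  rw [Finset.mem_Ioo] at hdm
  have hBC := hP.mono (i + 2) (i + 3) (by omega) (by omega)
  have hCd := hP.mono (i + 3) d hdm.1 hdm.2
  have hCX := hP.mono (i + 3) X hX hXn
  have hBCd : s * orient (P (i + 2)) (P (i + 3)) (P d) < 0 := by
    by_cases e : X = d
    · rwa [← e]
    · have h3 := hd X (by simp [hX, hXn]) e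
      have key : ((P X).1 - (P (i + 3)).1) * (s * orient (P (i + 2)) (P (i + 3)) (P d)) =
          ((P d).1 - (P (i + 3)).1) * (s * orient (P (i + 2)) (P (i + 3)) (P X)) +
          ((P (i + 3)).1 - (P (i + 2)).1) * (-s * orient (P (i + 3)) (P d) (P X)) := by
        simp only [orient]; ring
      nlinarith
  refine hP.good_of_cap (i := i) (A := i + 1) (B := i + 2) (C := i + 3) (D := d) (by omega)
    (by omega) (by omega) hdm.1 hdm.2 hs (e := -s) h1 hBCd ?_
  intro z hiz hz hz3 hzd hneg
  by_cases hz' : i + 3 < z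
  · exact hd z (by simp [hz', hz]) hzd
  · exfalso
    obtain rfl | rfl | rfl : z = i ∨ z = i + 1 ∨ z = i + 2 := by omega
    · rw [orient_rotate, orient_rotate] at hneg
      linarith
    · have e : orient (P (i + 1)) (P (i + 2)) (P (i + 1)) = 0 := by simp only [orient]; ring
      simp [e] at hneg
    · have e : orient (P (i + 1)) (P (i + 2)) (P (i + 2)) = 0 := by simp only [orient]; ring
      simp [e] at hneg

end Config

/-! ### Orientation patterns without a usable corner -/

/-- Properties of the orientation pattern `u i j k` (`P k` lies above the line `P i P j`, for
`i < j < k`) of a sequence for which no corner yields a short covering path. -/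
structure Rigid (n : ℕ) (u : ℕ → ℕ → ℕ → Prop) : Prop where
  cup : ∀ A B C D, 1 ≤ A → A < B → B < C → C < D → D < n → u A B C → u B C D →
    ∃ X, D < X ∧ X < n ∧ u A B X
  cap : ∀ A B C D, 1 ≤ A → A < B → B < C → C < D → D < n → ¬ u A B C → ¬ u B C D →
    ∃ X, D < X ∧ X < n ∧ ¬ u A B X
  up : ∀ i, i + 3 < n → u i (i + 1) (i + 2) → ¬ u (i + 1) (i + 2) (i + 3) →
    ∀ X, i + 3 < X → X < n → u (i + 2) (i + 3) X
  down : ∀ i, i + 3 < n → ¬ u i (i + 1) (i + 2) → u (i + 1) (i + 2) (i + 3) →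
    ∀ X, i + 3 < X → X < n → ¬ u (i + 2) (i + 3) X

namespace Rigid

variable {n : ℕ} {u : ℕ → ℕ → ℕ → Prop}

/-- Reflection in the horizontal axis. -/
lemma compl (h : Rigid n u) : Rigid n (fun i j k => ¬ u i j k) where
  cup := h.cap
  cap := by simpa only [not_not] using h.cup
  up := by simpa only [not_not] using h.down
  down := by simpa only [not_not] using h.up

/-- A sign change between consecutive triples propagates two steps further to the right. -/
lemma propagate (h : Rigid n u) {e : ℕ} (hn : e + 4 < n)
    (h1 : ¬ u e (e + 1) (e + 2)) (h2 : ∀ X, e + 2 < X → X < n → u (e + 1) (e + 2) X) :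
    ¬ u (e + 2) (e + 3) (e + 4) ∧ ∀ X, e + 4 < X → X < n → u (e + 3) (e + 4) X := by
  have h3 := h.down e (by omega) h1 (h2 (e + 3) (by omega) (by omega))
  have h4 := h3 (e + 4) (by omega) hn
  exact ⟨h4, h.up (e + 1) (by omega) (h2 (e + 3) (by omega) (by omega)) h4⟩

/-- There is no sign change between consecutive triples, except near the right end. With
`q = n - 1`, a change would propagate to `e`, `g = e + 2` and `k = e + 4`; then `e, g, k` and
`n - 2` form a cup, while `P q` is below the line `P e P g`. -/
lemma no_change (h : Rigid n u) {i : ℕ} (hi : i + 10 ≤ n) (h1 : u i (i + 1) (i + 2))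
    (h2 : ¬ u (i + 1) (i + 2) (i + 3)) : False := by
  have a0 := h.up i (by omega) h1 h2
  obtain ⟨b2, a2⟩ := h.propagate (e := i + 1) (by omega) h2 a0
  obtain ⟨-, a4⟩ := h.propagate (e := i + 3) (by omega) b2 a2
  have last : ∀ e, 1 ≤ e → (∀ X, e + 1 < X → X < n → u e (e + 1) X) →
      ∀ C, e + 1 < C → C < n - 1 → ¬ u (e + 1) C (n - 1) := by
    intro e he ha C h3 h4 h5
    obtain ⟨X, h6, h7, -⟩ := h.cup e (e + 1) C (n - 1) he (by omega) h3 h4 (by omega)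
      (ha C h3 (by omega)) h5
    omega
  have l0 := last (i + 2) (by omega) a0
  have l2 := last (i + 4) (by omega) a2
  have l4 := last (i + 6) (by omega) a4
  have m0 : ∀ C, i + 5 < C → C < n - 1 → u (i + 3) (i + 5) C := by
    intro C h3 h4
    by_contra h5
    obtain ⟨X, h6, h7, -⟩ := h.cap (i + 3) (i + 5) C (n - 1) (by omega) (by omega) h3 h4
      (by omega) h5 (l2 C h3 h4)
    omega
  have m2 : ∀ C, i + 7 < C → C < n - 1 → u (i + 5) (i + 7) C := by
    intro C h3 h4
    by_contra h5
    obtain ⟨X, h6, h7, -⟩ := h.cap (i + 5) (i + 7) C (n - 1) (by omega) (by omega) h3 h4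
      (by omega) h5 (l4 C h3 h4)
    omega
  obtain ⟨X, h6, h7, h8⟩ := h.cup (i + 3) (i + 5) (i + 7) (n - 2) (by omega) (by omega)
    (by omega) (by omega) (by omega) (m0 _ (by omega) (by omega)) (m2 _ (by omega) (by omega))
  obtain rfl : X = n - 1 := by omega
  exact l0 (i + 5) (by omega) (by omega) h8

/-- In a run of cups `j, j + 1, j + 2`, the last point above the line `P j P (j + 1)` moves to the
right as `j` decreases, so the run takes up at most about half of the sequence. -/
lemma no_run (h : Rigid n u) {k : ℕ} (hk : k + 2 < n) (hk1 : 1 ≤ k) (hn : n ≤ 2 * k + 1)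
    (hu : ∀ j, 1 ≤ j → j ≤ k → u j (j + 1) (j + 2)) : False := by
  have key : ∀ t j, j + t = k → 1 ≤ j → ∃ X, X < n ∧ k + 2 + t ≤ X ∧ u j (j + 1) X := by
    intro t
    induction t with
    | zero =>
      intro j hj hj1
      obtain rfl : j = k := by omega
      exact ⟨j + 2, hk, by omega, hu j hj1 le_rfl⟩
    | succ t ih =>
      intro j hj hj1
      obtain ⟨X, h1, h2, h3⟩ := ih (j + 1) (by omega) (by omega)
      obtain ⟨Y, h4, h5, h6⟩ := h.cup j (j + 1) (j + 2) X hj1 (by omega) (by omega) (by omega) h1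
        (hu j hj1 (by omega)) h3
      exact ⟨Y, h5, by omega, h6⟩
  obtain ⟨X, h1, h2, -⟩ := key (k - 1) 1 (by omega) le_rfl
  omega

lemma not_of_first (h : Rigid n u) (hn : 21 ≤ n) (h1 : u 1 2 3) : False := by
  refine h.no_run (k := n / 2) (by omega) (by omega) (by omega) ?_
  intro j hj
  induction j, hj using Nat.le_induction with
  | base => exact fun _ => h1
  | succ j hj ih =>
    intro hjk
    by_contra hcon
    exact h.no_change (i := j) (by omega) (ih (by omega)) hcon

lemma false (h : Rigid n u) (hn : 21 ≤ n) : False := by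
  by_cases h1 : u 1 2 3
  · exact h.not_of_first hn h1
  · exact h.compl.not_of_first hn h1

end Rigid

/-- Among at least 21 points in general position, sorted from left to right, some start admits a
short covering path of the points after it. -/
lemma Config.exists_good {P : ℕ → ℝ × ℝ} {n : ℕ} (hP : Config P n) (hn : 21 ≤ n) :
    ∃ i, i < n ∧ Good (P i) (tailSet P n i) := by
  by_contra! hno
  refine Rigid.false (n := n) (u := fun i j k => 0 < orient (P i) (P j) (P k)) ?_ hn
  have neg : ∀ {i j k}, i < j → j < k → k < n → ¬ 0 < orient (P i) (P j) (P k) →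
      orient (P i) (P j) (P k) < 0 := fun h1 h2 h3 h4 =>
    lt_of_le_of_ne (not_lt.1 h4) (hP.gp _ _ _ h1 h2 h3)
  constructor
  · intro A B C D hA hAB hBC hCD hD h1 h2
    by_contra! hcon
    refine hno 0 (by omega) (hP.good_of_cap_of_right (i := 0) (by omega) hAB hBC hCD hD
      (s := -1) (Or.inr rfl) (by linarith) (by linarith) ?_)
    intro X hX hXn
    have := neg hAB (by omega) hXn (hcon X hX hXn).not_gt
    linarith
  · intro A B C D hA hAB hBC hCD hD h1 h2
    by_contra! hcon
    have h1' := neg hAB hBC (by omega) h1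
    have h2' := neg hBC hCD (by omega) h2
    refine hno 0 (by omega) (hP.good_of_cap_of_right (i := 0) (by omega) hAB hBC hCD hD
      (s := 1) (Or.inl rfl) (by linarith) (by linarith) ?_)
    intro X hX hXn
    linarith [hcon X hX hXn]
  · intro i hi h1 h2 X hX hXn
    by_contra hcon
    have h2' := neg (by omega) (by omega) (by omega) h2
    have h3' := neg (by omega) (by omega) (by omega) hcon
    exact hno i (by omega) (hP.good_of_turn (s := 1) (Or.inl rfl) (by linarith) (by linarith)
      hX hXn (by linarith))
  · intro i hi h1 h2 X hX hXn hcon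
    have h1' := neg (by omega) (by omega) (by omega) h1
    exact hno i (by omega) (hP.good_of_turn (s := -1) (Or.inr rfl) (by linarith) (by linarith)
      hX hXn (by linarith))

/-! ### All finite sets with distinct abscissae -/

lemma Config.good_zero {P : ℕ → ℝ × ℝ} {n : ℕ} (hP : Config P n) :
    ∀ i, i < n → Good (P i) (tailSet P n i) → Good (P 0) (tailSet P n 0) := by
  intro i
  induction i with
  | zero => exact fun _ h => h
  | succ i ih =>
    intro hi h
    refine ih (by omega) (Good.extend_left (hP.mono i (i + 1) (by omega) hi)
      (Finset.mem_image.2 ⟨i + 1, by simp [hi], rfl⟩) ?_)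
    have : (tailSet P n i).erase (P (i + 1)) = tailSet P n (i + 1) := by
      ext z
      simp only [tailSet, Finset.mem_erase, Finset.mem_image, Finset.mem_Ioo]
      constructor
      · rintro ⟨h1, j, h2, rfl⟩
        refine ⟨j, ⟨?_, h2.2⟩, rfl⟩
        have : j ≠ i + 1 := fun e => h1 (by rw [e])
        omega
      · rintro ⟨j, h2, rfl⟩
        refine ⟨fun e => ?_, j, ⟨by omega, h2.2⟩, rfl⟩
        have := hP.mono (i + 1) j h2.1 h2.2
        simp [e] at this
    rwa [this]

lemma exists_sorted (T : Finset (ℝ × ℝ)) (hinj : Set.InjOn Prod.fst (T : Set (ℝ × ℝ))) :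
    ∃ P : ℕ → ℝ × ℝ, (∀ i j, i < j → j < T.card → (P i).1 < (P j).1) ∧
      T = (Finset.range T.card).image P := by
  classical
  have hc : (T.image Prod.fst).card = T.card := Finset.card_image_of_injOn hinj
  have hex : ∀ i : ℕ, ∃ p : ℝ × ℝ, ∀ h : i < T.card,
      p ∈ T ∧ p.1 = (T.image Prod.fst).orderEmbOfFin hc ⟨i, h⟩ := by
    intro i
    by_cases h : i < T.card
    · have := (T.image Prod.fst).orderEmbOfFin_mem hc ⟨i, h⟩
      obtain ⟨p, hp, e⟩ := Finset.mem_image.1 this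
      exact ⟨p, fun _ => ⟨hp, e⟩⟩
    · exact ⟨0, fun h' => absurd h' h⟩
  choose P hP using hex
  have hmono : ∀ i j, i < j → j < T.card → (P i).1 < (P j).1 := by
    intro i j hij hj
    rw [(hP i (hij.trans hj)).2, (hP j hj).2]
    exact ((T.image Prod.fst).orderEmbOfFin hc).strictMono hij
  refine ⟨P, hmono, ?_⟩
  refine (Finset.eq_of_subset_of_card_le ?_ ?_).symm
  · intro z hz
    obtain ⟨i, hi, rfl⟩ := Finset.mem_image.1 hz
    exact (hP i (Finset.mem_range.1 hi)).1
  · rw [Finset.card_image_of_injOn, Finset.card_range]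
    intro i hi j hj e
    simp only [Finset.coe_range, Set.mem_Iio] at hi hj
    rcases lt_trichotomy i j with h | h | h
    · exact absurd (congrArg Prod.fst e) (hmono i j h hj).ne
    · exact h
    · exact absurd (congrArg Prod.fst e) (hmono j i h hi).ne'

lemma good_of_collinear {o : ℝ × ℝ} {T : Finset (ℝ × ℝ)}
    (hinj : Set.InjOn Prod.fst (T : Set (ℝ × ℝ))) (hoT : ∀ z ∈ T, o.1 < z.1) {a b c : ℝ × ℝ}
    (ha : a ∈ T) (hb : b ∈ T) (hc : c ∈ T) (hab : a.1 < b.1) (hbc : b.1 < c.1)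
    (h : orient a b c = 0) : Good o T := by
  classical
  have hb' : lin a b b = lin a b a := by simp only [lin_apply]; ring
  have hc' : lin a b c = lin a b a := by rw [lin_eq, h, add_zero]
  have hcard : ({a, b, c} : Finset (ℝ × ℝ)).card = 3 := by
    rw [Finset.card_eq_three]
    refine ⟨a, b, c, ?_, ?_, ?_, rfl⟩ <;> rintro rfl <;> linarith
  have h01 : lin a b (0, 1) ≠ 0 := by
    simp only [lin_apply]
    linarith
  rcases le_total (lin a b o) (lin a b a) with h1 | h1
  · refine good_of_collinear_aux hinj hoT (lin a b) h01 (lin a b a) h1 ?_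
    rw [← hcard]
    refine Finset.card_le_card ?_
    intro z hz
    simp only [Finset.mem_insert, Finset.mem_singleton] at hz
    rcases hz with rfl | rfl | rfl <;> simp [*]
  · refine good_of_collinear_aux hinj hoT (-lin a b) (by simpa using h01) (-lin a b a)
      (by simpa using h1) ?_
    rw [← hcard]
    refine Finset.card_le_card ?_
    intro z hz
    simp only [Finset.mem_insert, Finset.mem_singleton] at hz
    rcases hz with rfl | rfl | rfl <;> simp [*]

lemma good_of_card {o : ℝ × ℝ} {T : Finset (ℝ × ℝ)}
    (hinj : Set.InjOn Prod.fst (T : Set (ℝ × ℝ))) (hoT : ∀ z ∈ T, o.1 < z.1)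
    (hT : 21 ≤ T.card) : Good o T := by
  obtain ⟨P, hmono, hPT⟩ := exists_sorted T hinj
  have hmem : ∀ i, i < T.card → P i ∈ T := fun i hi => by
    rw [hPT]
    exact Finset.mem_image.2 ⟨i, Finset.mem_range.2 hi, rfl⟩
  by_cases hgp : ∀ i j k, i < j → j < k → k < T.card → orient (P i) (P j) (P k) ≠ 0
  · have hP : Config P T.card := ⟨hmono, hgp⟩
    obtain ⟨i, hi, hgood⟩ := hP.exists_good hT
    have h0 := hP.good_zero i hi hgood
    have hP0 := hmem 0 (by omega)
    refine Good.extend_left (hoT _ hP0) hP0 ?_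
    have : T.erase (P 0) = tailSet P T.card 0 := by
      ext z
      simp only [tailSet, Finset.mem_erase, Finset.mem_image, Finset.mem_Ioo]
      constructor
      · rintro ⟨h1, h2⟩
        rw [hPT] at h2
        obtain ⟨j, h3, rfl⟩ := Finset.mem_image.1 h2
        refine ⟨j, ⟨?_, Finset.mem_range.1 h3⟩, rfl⟩
        have : j ≠ 0 := fun e => h1 (by rw [e])
        omega
      · rintro ⟨j, h2, rfl⟩
        refine ⟨fun e => ?_, hmem j h2.2⟩
        have := hmono 0 j h2.1 h2.2
        simp [e] at this
    rwa [this]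
  · push Not at hgp
    obtain ⟨i, j, k, hij, hjk, hk, e⟩ := hgp
    exact good_of_collinear hinj hoT (hmem i (by omega)) (hmem j (by omega)) (hmem k hk)
      (hmono i j hij (by omega)) (hmono j k hjk hk) e

/-! ### From lists to indexed vertex sequences -/

lemma segment_getD_subset : ∀ (L : List (ℝ × ℝ)) (i : ℕ), i + 1 < L.length →
    segment ℝ (L.getD i 0) (L.getD (i + 1) 0) ⊆ pathSet L
  | [], _, h => by simp at h
  | [_], _, h => by simp at h
  | a :: b :: t, 0, _ => fun _ hy => Or.inl hy
  | a :: b :: t, i + 1, h => fun _ hy =>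
      Or.inr (segment_getD_subset (b :: t) i (by simpa using h) hy)

lemma exists_mem_segment_getD : ∀ (L : List (ℝ × ℝ)) {p : ℝ × ℝ}, 2 ≤ L.length → p ∈ pathSet L →
    ∃ i, i + 1 < L.length ∧ p ∈ segment ℝ (L.getD i 0) (L.getD (i + 1) 0)
  | [], _, h, _ => by simp at h
  | [_], _, h, _ => by simp at h
  | a :: b :: t, p, _, hp => by
      rcases hp with hp | hp
      · exact ⟨0, by simp, hp⟩
      · cases t with
        | nil =>
          obtain rfl : p = b := by simpa [pathSet] using hp
          exact ⟨0, by simp, right_mem_segment ℝ _ _⟩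
        | cons c t =>
          obtain ⟨i, hi, h⟩ := exists_mem_segment_getD (b :: c :: t) (by simp) hp
          exact ⟨i + 1, by simpa using hi, h⟩

/-- Two edges of a noncrossing path can only meet if they are consecutive, and then only in
their common vertex. -/
lemma NC.eq_of_mem : ∀ {L : List (ℝ × ℝ)} {i j : ℕ} {y : ℝ × ℝ}, NC L → i < j →
    j + 1 < L.length → y ∈ segment ℝ (L.getD i 0) (L.getD (i + 1) 0) →
    y ∈ segment ℝ (L.getD j 0) (L.getD (j + 1) 0) → y = L.getD (i + 1) 0 ∧ j = i + 1
  | [], _, _, _, _, _, h, _, _ => by simp at h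
  | [_], _, _, _, _, _, h, _, _ => by simp at h
  | a :: b :: t, i, 0, _, _, h, _, _, _ => by omega
  | a :: b :: t, 0, j + 1, y, hnc, _, hj, hy, hy' => by
      have hyb : y = b :=
        hnc.2.1 ⟨hy, segment_getD_subset (b :: t) j (by simpa using hj) hy'⟩
      refine ⟨hyb, ?_⟩
      cases j with
      | zero => rfl
      | succ j =>
        exfalso
        cases t with
        | nil => simp at hj
        | cons c t =>
          have h2 : y ∈ pathSet (c :: t) :=
            segment_getD_subset (c :: t) j (by simpa using hj) hy'
          rw [hyb] at h2
          exact hnc.2.2.1 (hnc.2.2.2.1 ⟨left_mem_segment ℝ b c, h2⟩)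
  | a :: b :: t, i + 1, j + 1, y, hnc, hij, hj, hy, hy' => by
      obtain ⟨h1, h2⟩ := NC.eq_of_mem (L := b :: t) (i := i) (j := j) hnc.2.2 (by omega)
        (by simpa using hj) hy hy'
      exact ⟨h1, by omega⟩

/-- Let `Q` be a set of at least `22` points in the plane, no two on a common vertical
line, with leftmost point `l`. Then there is a noncrossing covering path for `Q` with
`|Q| - 2` edges that lies in the closed halfplane to the right of the vertical line
through `l` and has `l` as an endpoint. -/
theorem covering_path_right_of_leftmost (Q : Finset (ℝ × ℝ)) (hcard : 22 ≤ Q.card)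
    (hx : ∀ p ∈ Q, ∀ q ∈ Q, p ≠ q → p.1 ≠ q.1)
    (l : ℝ × ℝ) (hl : l ∈ Q) (hlmin : ∀ p ∈ Q, l.1 ≤ p.1) :
    ∃ v : Fin (Q.card - 2 + 1) → ℝ × ℝ,
      IsNoncrossingPath v ∧
      (∀ p ∈ Q, ∃ i : Fin (Q.card - 2), p ∈ pathEdge v i) ∧
      (v 0 = l ∨ v (Fin.last (Q.card - 2)) = l) ∧
      (∀ i : Fin (Q.card - 2), pathEdge v i ⊆ {x : ℝ × ℝ | l.1 ≤ x.1}) := by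
  classical
  have hTcard : (Q.erase l).card = Q.card - 1 := Finset.card_erase_of_mem hl
  obtain ⟨L, hnc, hlen, hcov, hright⟩ : Good l (Q.erase l) := by
    refine good_of_card ?_ ?_ (by omega)
    · intro p hp q hq e
      by_contra hne
      exact hx p (Finset.mem_of_mem_erase hp) q (Finset.mem_of_mem_erase hq) hne e
    · intro z hz
      have hzQ := Finset.mem_of_mem_erase hz
      exact lt_of_le_of_ne (hlmin z hzQ) (hx l hl z hzQ (Finset.ne_of_mem_erase hz).symm)
  have hlen' : (l :: L).length = Q.card - 2 + 1 := by
    simp only [List.length_cons]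
    omega
  refine ⟨fun i => (l :: L).getD i 0, ⟨?_, ?_⟩, ?_, Or.inl rfl, ?_⟩
  · intro i j hij
    refine Set.Subset.antisymm ?_ ?_
    · rintro y ⟨hy, hy'⟩
      exact (hnc.eq_of_mem (i := i) (j := j) (by omega) (by omega) hy hy').1
    · rintro y rfl
      refine ⟨right_mem_segment ℝ _ _, ?_⟩
      have : (fun i : Fin (Q.card - 2 + 1) => (l :: L).getD i 0) i.succ =
          (fun i : Fin (Q.card - 2 + 1) => (l :: L).getD i 0) j.castSucc := by
        simp only [Fin.val_succ, Fin.val_castSucc, hij]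
      rw [this]
      exact left_mem_segment ℝ _ _
  · intro i j hij
    refine Set.eq_empty_of_forall_notMem ?_
    rintro y ⟨hy, hy'⟩
    have := (hnc.eq_of_mem (i := i) (j := j) (by omega) (by omega) hy hy').2
    omega
  · intro p hp
    have hp' : p ∈ pathSet (l :: L) := by
      by_cases e : p = l
      · exact mem_pathSet (by simp [e])
      · exact hcov p (Finset.mem_erase.2 ⟨e, hp⟩)
    obtain ⟨i, hi, h⟩ := exists_mem_segment_getD (l :: L) (by omega) hp'
    exact ⟨⟨i, by omega⟩, h⟩
  · intro i
    refine (segment_getD_subset (l :: L) i (by omega)).trans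
      (pathSet_subset (convex_ge_fun (LinearMap.fst ℝ ℝ ℝ) l.1) ?_)
    intro x hx
    rcases List.mem_cons.1 hx with rfl | hx
    · exact le_refl x.1
    · exact hright x hx
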